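/- Let α be an irrational real number and let (m_k) be given by the Master recursion, with m(x) = Σ_{k≥1} m_k x^k of radius of convergence R > 0. Then for every real r with 0 < r < R one has the a priori bound r·exp(m(r)) ≤ 4·m(r). -/

import Mathlib

/-- `D α k = 2(1 - cos(2πkα))`, the small denominator of the Master recursion. -/
noncomputable def D (α : ℝ) (k : ℕ) : ℝ := 2 * (1 - Real.cos (2 * Real.pi * k * α))

theorem D_pos {α : ℝ} (hα : Irrational α) {k : ℕ} (hk : k ≠ 0) : 0 < D α k := by
  have hne : Real.cos (2 * Real.pi * k * α) ≠ 1 := by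
    intro h
    obtain ⟨n, hn⟩ := (Real.cos_eq_one_iff _).1 h
    refine (hα.natCast_mul hk).ne_int n ?_
    have hpi : (2 * Real.pi) ≠ 0 := by positivity
    apply mul_left_cancel₀ hpi
    linarith
  have hlt := lt_of_le_of_ne (Real.cos_le_one (2 * Real.pi * k * α)) hne
  unfold D
  linarith

theorem D_le_four (α : ℝ) (k : ℕ) : D α k ≤ 4 := by
  have := Real.neg_one_le_cos (2 * Real.pi * k * α)
  unfold D
  linarith

theorem natCast_mul_pow_pred_le_div {t ρ : ℝ} (ht : 0 ≤ t) (htρ : t < ρ) (k : ℕ) :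
    (k : ℝ) * t ^ (k - 1) ≤ ρ ^ k / (ρ - t) := by
  rw [le_div_iff₀ (sub_pos.2 htρ)]
  have hρ : 0 ≤ ρ := ht.trans htρ.le
  have hsum : (k : ℝ) * t ^ (k - 1) ≤ ∑ i ∈ Finset.range k, ρ ^ i * t ^ (k - 1 - i) := by
    have hconst : (k : ℝ) * t ^ (k - 1) = ∑ _i ∈ Finset.range k, t ^ (k - 1) := by simp
    rw [hconst]
    refine Finset.sum_le_sum fun i hi => ?_
    have hi' : i + (k - 1 - i) = k - 1 := by
      have := Finset.mem_range.1 hi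
      omega
    calc t ^ (k - 1) = t ^ i * t ^ (k - 1 - i) := by rw [← pow_add, hi']
      _ ≤ ρ ^ i * t ^ (k - 1 - i) := by gcongr
  calc (k : ℝ) * t ^ (k - 1) * (ρ - t)
      ≤ (∑ i ∈ Finset.range k, ρ ^ i * t ^ (k - 1 - i)) * (ρ - t) :=
        mul_le_mul_of_nonneg_right hsum (sub_pos.2 htρ).le
    _ = ρ ^ k - t ^ k := geom_sum₂_mul ρ t k
    _ ≤ ρ ^ k := sub_le_self _ (pow_nonneg ht k)

theorem summable_mul_natCast_mul_pow_pred {c : ℕ → ℝ} (hc : ∀ k, 0 ≤ c k) {t ρ : ℝ}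
    (hs : Summable fun k => c k * ρ ^ k) (ht : 0 ≤ t) (htρ : t < ρ) :
    Summable fun k : ℕ => c k * (k * t ^ (k - 1)) := by
  refine Summable.of_nonneg_of_le (fun k => mul_nonneg (hc k) (by positivity)) (fun k => ?_)
    (hs.div_const (ρ - t))
  rw [mul_div_assoc]
  exact mul_le_mul_of_nonneg_left (natCast_mul_pow_pred_le_div ht htρ k) (hc k)

theorem hasDerivAt_tsum_mul_pow {c : ℕ → ℝ} (hc : ∀ k, 0 ≤ c k) {x ρ : ℝ}
    (hs : Summable fun k => c k * ρ ^ k) (hx : |x| < ρ) :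
    HasDerivAt (fun y => ∑' k, c k * y ^ k) (∑' k : ℕ, c k * (k * x ^ (k - 1))) x := by
  obtain ⟨t, hxt, htρ⟩ := exists_between hx
  have ht : 0 < t := (abs_nonneg x).trans_lt hxt
  refine hasDerivAt_tsum_of_isPreconnected
    (summable_mul_natCast_mul_pow_pred hc hs ht.le htρ) Metric.isOpen_ball
    (convex_ball (0 : ℝ) t).isPreconnected
    (fun k y _ => (hasDerivAt_pow k y).const_mul (c k)) (fun k y hy => ?_)
    (Metric.mem_ball_self ht) ?_ (by simpa using hxt)
  · have hy' : |y| ≤ t := by simpa using (mem_ball_zero_iff.1 hy).le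
    rw [Real.norm_eq_abs, abs_mul, abs_mul, abs_pow, abs_of_nonneg (hc k), Nat.abs_cast]
    have := hc k
    gcongr
  · exact summable_of_ne_finset_zero (s := {0}) fun k hk => by
      simp [zero_pow (show k ≠ 0 by simpa using hk)]

/-- The Cauchy product identity behind `x f'(x) = x g'(x) f(x)`. -/
theorem tsum_mul_deriv_eq {m F : ℕ → ℝ} (hm : ∀ k, 0 ≤ m k) (hFnn : ∀ k, 0 ≤ F k)
    (hF : ∀ k : ℕ, 1 ≤ k →
      (k : ℝ) * F k = ∑ j ∈ Finset.Icc 1 k, (j : ℝ) * m j * F (k - j))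
    {x ρ : ℝ} (hsm : Summable fun k => m k * ρ ^ k) (hsF : Summable fun k => F k * ρ ^ k)
    (hx : 0 < x) (hxρ : x < ρ) :
    ∑' k : ℕ, F k * (k * x ^ (k - 1)) =
      (∑' k : ℕ, m k * (k * x ^ (k - 1))) * ∑' k, F k * x ^ k := by
  have hpow (c : ℕ → ℝ) (k : ℕ) : x * (c k * (k * x ^ (k - 1))) = k * c k * x ^ k := by
    rcases k with _ | k
    · simp
    · simp only [Nat.add_sub_cancel, pow_succ]
      ring
  have hsm' : Summable fun k : ℕ => (k : ℝ) * m k * x ^ k := by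
    simpa only [hpow] using (summable_mul_natCast_mul_pow_pred hm hsm hx.le hxρ).mul_left x
  have hsF' : Summable fun k : ℕ => F k * x ^ k :=
    hsF.of_nonneg_of_le (fun k => mul_nonneg (hFnn k) (by positivity)) fun k =>
      mul_le_mul_of_nonneg_left (pow_le_pow_left₀ hx.le hxρ.le k) (hFnn k)
  apply mul_left_cancel₀ hx.ne'
  rw [← mul_assoc, ← tsum_mul_left, ← tsum_mul_left (f := fun k : ℕ => m k * (k * x ^ (k - 1)))]
  simp only [hpow]
  rw [tsum_mul_tsum_eq_tsum_sum_range_of_summable_norm hsm'.norm hsF'.norm]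
  refine tsum_congr fun k => ?_
  have hterm : ∀ j ∈ Finset.range (k + 1),
      (j : ℝ) * m j * x ^ j * (F (k - j) * x ^ (k - j)) = j * m j * F (k - j) * x ^ k := by
    intro j hj
    have hjk : j + (k - j) = k := by
      have := Finset.mem_range.1 hj
      omega
    calc _ = (j : ℝ) * m j * F (k - j) * (x ^ j * x ^ (k - j)) := by ring
      _ = _ := by rw [← pow_add, hjk]
  rw [Finset.sum_congr rfl hterm, ← Finset.sum_mul]
  congr 1
  rcases k with _ | k
  · simp
  · rw [hF (k + 1) (by omega), Finset.range_eq_Ico, Finset.sum_eq_sum_Ico_succ_bot (by omega)]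
    simp only [Nat.cast_zero, zero_mul, zero_add]
    rfl

theorem exp_tsum_le_tsum {m F : ℕ → ℝ} (hm0 : m 0 = 0) (hF0 : F 0 = 1)
    (hm : ∀ k, 0 ≤ m k) (hFnn : ∀ k, 0 ≤ F k)
    (hF : ∀ k : ℕ, 1 ≤ k →
      (k : ℝ) * F k = ∑ j ∈ Finset.Icc 1 k, (j : ℝ) * m j * F (k - j))
    {r ρ : ℝ} (hsm : Summable fun k => m k * ρ ^ k) (hsF : Summable fun k => F k * ρ ^ k)
    (hr : 0 ≤ r) (hrρ : r < ρ) :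
    Real.exp (∑' k, m k * r ^ k) ≤ ∑' k, F k * r ^ k := by
  have hderiv : ∀ x ∈ Set.Icc 0 r, HasDerivAt
      (fun y => (∑' k, F k * y ^ k) * Real.exp (-∑' k, m k * y ^ k))
      ((∑' k : ℕ, F k * (k * x ^ (k - 1))) * Real.exp (-∑' k, m k * x ^ k) +
        (∑' k, F k * x ^ k) * (Real.exp (-∑' k, m k * x ^ k) *
          -∑' k : ℕ, m k * (k * x ^ (k - 1)))) x := by
    intro x hx
    have hxρ : |x| < ρ := by
      rw [abs_of_nonneg hx.1]
      exact hx.2.trans_lt hrρ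
    exact (hasDerivAt_tsum_mul_pow hFnn hsF hxρ).mul
      (hasDerivAt_tsum_mul_pow hm hsm hxρ).neg.exp
  have hmono := monotoneOn_of_deriv_nonneg (convex_Icc 0 r)
    (fun x hx => (hderiv x hx).continuousAt.continuousWithinAt)
    (fun x hx => (hderiv x (interior_subset hx)).differentiableAt.differentiableWithinAt)
    (fun x hx => by
      rw [(hderiv x (interior_subset hx)).deriv]
      rw [interior_Icc] at hx
      rw [tsum_mul_deriv_eq hm hFnn hF hsm hsF hx.1 (hx.2.trans hrρ)]
      apply le_of_eq
      ring)
  have hzero (c : ℕ → ℝ) : ∑' k, c k * (0 : ℝ) ^ k = c 0 := by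
    rw [tsum_eq_single 0 fun k hk => by simp [hk]]
    simp
  have hle := hmono (Set.left_mem_Icc.2 hr) (Set.right_mem_Icc.2 hr) hr
  simp only [hzero, hm0, hF0, neg_zero, Real.exp_zero, mul_one, Real.exp_neg] at hle
  rwa [← div_eq_mul_inv, one_le_div (Real.exp_pos _)] at hle

/-- if the power series `m(x) = Σ m_k x^k` of the Master recursion has
radius of convergence `R > 0`, then for every `0 < r < R` one has the a priori bound
`r·exp(m(r)) ≤ 4·m(r)` (here `m(r) = Σ m_k r^k = max_{|x|=r} |m(x)|` since `m_k ≥ 0`). -/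
theorem stmt2 (α : ℝ) (hα : Irrational α) (m F : ℕ → ℝ)
    (hm0 : m 0 = 0) (hF0 : F 0 = 1)
    (hm : ∀ k : ℕ, m (k + 1) = F k / D α (k + 1))
    (hF : ∀ k : ℕ, 1 ≤ k →
      (k : ℝ) * F k = ∑ j ∈ Finset.Icc 1 k, (j : ℝ) * m j * F (k - j))
    (R : ℝ) (hR : 0 < R)
    (hconv : ∀ r : ℝ, 0 ≤ r → r < R → Summable fun k : ℕ => m k * r ^ k)
    (r : ℝ) (hr0 : 0 < r) (hrR : r < R) :
    r * Real.exp (∑' k : ℕ, m k * r ^ k) ≤ 4 * ∑' k : ℕ, m k * r ^ k := by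
  have hD (k : ℕ) : 0 < D α (k + 1) := D_pos hα k.succ_ne_zero
  have hFnn : ∀ k, 0 ≤ F k := by
    intro k
    induction k using Nat.strong_induction_on with
    | _ k ih =>
      rcases k with _ | k
      · simp [hF0]
      · refine nonneg_of_mul_nonneg_right (b := F (k + 1)) (a := ((k + 1 : ℕ) : ℝ)) ?_
          (by positivity)
        rw [hF (k + 1) (by omega)]
        refine Finset.sum_nonneg fun j hj => ?_
        obtain ⟨hj1, hjk⟩ := Finset.mem_Icc.1 hj
        obtain ⟨i, rfl⟩ : ∃ i, j = i + 1 := ⟨j - 1, by omega⟩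
        rw [hm i]
        have h₁ := ih i (by omega)
        have h₂ := ih (k + 1 - (i + 1)) (by omega)
        have h₃ := hD i
        positivity
  have hmnn : ∀ k, 0 ≤ m k := by
    rintro (_ | k)
    · exact hm0.ge
    · rw [hm k]
      exact div_nonneg (hFnn k) (hD k).le
  have hFm (k : ℕ) : F k ≤ 4 * m (k + 1) := by
    have hFk : F k = D α (k + 1) * m (k + 1) := by
      rw [hm k, mul_div_cancel₀ _ (hD k).ne']
    rw [hFk]
    exact mul_le_mul_of_nonneg_right (D_le_four _ _) (hmnn _)
  have hterm {ρ : ℝ} (hρ : 0 < ρ) (k : ℕ) :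
      ρ * (F k * ρ ^ k) ≤ 4 * (m (k + 1) * ρ ^ (k + 1)) :=
    calc ρ * (F k * ρ ^ k) = F k * ρ ^ (k + 1) := by ring
      _ ≤ 4 * m (k + 1) * ρ ^ (k + 1) := mul_le_mul_of_nonneg_right (hFm k) (by positivity)
      _ = _ := by ring
  have hsm {ρ : ℝ} (hρ : 0 < ρ) (hρR : ρ < R) :
      Summable fun k => 4 * (m (k + 1) * ρ ^ (k + 1)) :=
    ((summable_nat_add_iff 1).2 (hconv ρ hρ.le hρR)).mul_left 4
  have hsF {ρ : ℝ} (hρ : 0 < ρ) (hρR : ρ < R) : Summable fun k => F k * ρ ^ k :=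
    (summable_mul_left_iff hρ.ne').1 <| (hsm hρ hρR).of_nonneg_of_le
      (fun k => mul_nonneg hρ.le (mul_nonneg (hFnn k) (by positivity))) (hterm hρ)
  obtain ⟨ρ, hrρ, hρR⟩ := exists_between hrR
  have hρ := hr0.trans hrρ
  calc r * Real.exp (∑' k : ℕ, m k * r ^ k)
      ≤ r * ∑' k, F k * r ^ k := mul_le_mul_of_nonneg_left
        (exp_tsum_le_tsum hm0 hF0 hmnn hFnn hF (hconv ρ hρ.le hρR) (hsF hρ hρR) hr0.le hrρ) hr0.le
    _ = ∑' k, r * (F k * r ^ k) := tsum_mul_left.symm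
    _ ≤ ∑' k, 4 * (m (k + 1) * r ^ (k + 1)) :=
        ((hsF hr0 hrR).mul_left r).tsum_le_tsum (hterm hr0) (hsm hr0 hrR)
    _ = 4 * ∑' k : ℕ, m k * r ^ k := by
        rw [tsum_mul_left, (hconv r hr0.le hrR).tsum_eq_zero_add]
        simp [hm0]
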